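/- Let N ≥ 3 be an integer and let K ⊆ ℤ/Nℤ be sos-valid, i.e., there exists a finite family of functions h_i : ℤ/Nℤ → ℂ, each supported on K, such that cos(π/N) − cos((2j+1)π/N) = Σ_i |h_i(j)|² for all j ∈ ℤ/Nℤ. Then |K| ≥ ln(N/2). -/

import Mathlib

open Real Finset

/-- The cyclic distance on `ℤ/Nℤ`: `d(a,b) = min{|m| : m ∈ ℤ, m ≡ a − b (mod N)}`. -/
def cycDist (N : ℕ) (a b : ZMod N) : ℕ := min (a - b).val (b - a).val

/-- `C ⊆ ℤ/Nℤ` has in-diameter at most `γ` if it is contained in an interval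
`{x, x+1, …, x+γ}`. -/
def HasInDiamLE (N γ : ℕ) (C : Finset (ZMod N)) : Prop :=
  ∃ x : ZMod N, ∀ c ∈ C, ∃ t : ℕ, t ≤ γ ∧ c = x + (t : ZMod N)

/-- The pure frequency `e_k : ℤ/Nℤ → ℂ`, `e_k(j) = exp(2πi·kj/N)`. -/
noncomputable def freq (N : ℕ) (k j : ZMod N) : ℂ :=
  Complex.exp (2 * Real.pi * Complex.I * (k.val : ℂ) * (j.val : ℂ) / N)

/-- `h : ℤ/Nℤ → ℂ` is supported on `K` if it is a `ℂ`-linear combination of the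
pure frequencies `e_k`, `k ∈ K`. -/
def SupportedOn (N : ℕ) (K : Finset (ZMod N)) (h : ZMod N → ℂ) : Prop :=
  ∃ c : ZMod N → ℂ, h = fun j => ∑ k ∈ K, c k * freq N k j

/-- `K ⊆ ℤ/Nℤ` is sos-valid if the facet function `cos(π/N) − cos((2j+1)π/N)` of the
regular `N`-gon is a finite sum of squared moduli of functions supported on `K`. -/
def SosValid (N : ℕ) (K : Finset (ZMod N)) : Prop :=
  ∃ (m : ℕ) (h : Fin m → ZMod N → ℂ), (∀ i, SupportedOn N K (h i)) ∧
    ∀ j : ZMod N,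
      Real.cos (π / N) - Real.cos ((2 * (j.val : ℝ) + 1) * π / N) =
        ∑ i, Complex.normSq (h i j)

/-!
Duality: if the matrix `(g (k - l))` indexed by `k, l ∈ K` is positive semidefinite, then the linear
functional sending `e_k` to `g k` is nonnegative on `|h|²` for every `h` supported on `K`, hence on
the facet function if `K` is sos-valid. Evaluation of trigonometric polynomials at the angle `0`,
halfway between two vertices, sends the facet function to `cos (π / N) - 1 < 0`. It is not defined
on `ℤ/Nℤ`, but it can be imitated on low frequencies: with `k̄` the least absolute residue of `k`,
let `g k = exp (-iπ k̄ / N)` if `|k̄| ≤ γ` and `g k = 0` otherwise. Suppose that `γ ≥ 1`, that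
`3γ < N`, and that being at cyclic distance at most `γ` is an equivalence relation on `K`. Residues
are then additive within a class, so `g (k - l)` is of rank one on each class and zero between
classes. Thus `(g (k - l))` is positive semidefinite, and `K` is not sos-valid.

A suitable `γ ≤ 2 ^ (|K| - 1)` always exists. Start from singletons and `γ = 1`; as long as two
clusters are at distance at most `γ`, merge them and double `γ`. The diameters of the clusters keep
adding up to at most `γ`, and there are at most `|K| - 1` merges.
Hence `N ≤ 3 * 2 ^ (|K| - 1)` for every sos-valid `K`.
-/

open scoped ComplexConjugate ComplexOrder

/-! ### Clustering a finite set -/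

section Clustering

variable {α ι : Type*} {K : Finset α} {f : α → ι}

/-- The cluster of the points of `K` to which the labelling `f` gives the label `l`. -/
def cluster (K : Finset α) (f : α → ι) (l : ι) : Set α := {z | z ∈ K ∧ f z = l}

variable [DecidableEq ι]

/-- The labelling obtained from `f` by merging the cluster of label `b` into that of label `a`. -/
def mergeLabels (f : α → ι) (a b : ι) (z : α) : ι := if f z = b then a else f z

lemma cluster_mergeLabels_self (K : Finset α) (f : α → ι) (a b : ι) :
    cluster K (mergeLabels f a b) a = cluster K f a ∪ cluster K f b := by
  ext z
  simp only [cluster, mergeLabels, Set.mem_ofPred_eq, Set.mem_union]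
  grind

lemma cluster_mergeLabels_of_ne {a b l : ι} (hla : l ≠ a) (hlb : l ≠ b) :
    cluster K (mergeLabels f a b) l = cluster K f l := by
  ext z
  simp only [cluster, mergeLabels, Set.mem_ofPred_eq]
  grind

lemma image_mergeLabels_subset {a b : ι} (hab : a ≠ b) (ha : a ∈ K.image f) :
    K.image (mergeLabels f a b) ⊆ (K.image f).erase b := by
  intro l hl
  simp only [mergeLabels, mem_image, mem_erase] at *
  grind

variable [PseudoMetricSpace α]

/-- The sum of the diameters of the clusters into which the labelling `f` divides `K`. -/
noncomputable def totalDiam (K : Finset α) (f : α → ι) : ℝ :=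
  ∑ l ∈ K.image f, Metric.diam (cluster K f l)

lemma totalDiam_id [DecidableEq α] (K : Finset α) : totalDiam K id = 0 :=
  sum_eq_zero fun _ _ => Metric.diam_subsingleton fun _ hx _ hy => hx.2.trans hy.2.symm

lemma dist_le_totalDiam {x y : α} (hx : x ∈ K) (hy : y ∈ K) (hxy : f x = f y) :
    dist x y ≤ totalDiam K f := by
  have bounded : Bornology.IsBounded (cluster K f (f x)) :=
    (K.finite_toSet.subset fun _ hz => hz.1).isBounded
  calc dist x y ≤ Metric.diam (cluster K f (f x)) :=
        Metric.dist_le_diam_of_mem bounded ⟨hx, rfl⟩ ⟨hy, hxy.symm⟩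
    _ ≤ totalDiam K f := single_le_sum (f := fun l => Metric.diam (cluster K f l))
        (fun _ _ => Metric.diam_nonneg) (mem_image_of_mem f hx)

lemma totalDiam_mergeLabels_le {x y : α} (hx : x ∈ K) (hy : y ∈ K) (hxy : f x ≠ f y) :
    totalDiam K (mergeLabels f (f x) (f y)) ≤ totalDiam K f + dist x y := by
  have hfx : f x ∈ (K.image f).erase (f y) := mem_erase.mpr ⟨hxy, mem_image_of_mem f hx⟩
  set others := ((K.image f).erase (f y)).erase (f x) with hothers
  have others_unchanged : ∀ l ∈ others,
      Metric.diam (cluster K (mergeLabels f (f x) (f y)) l) = Metric.diam (cluster K f l) := by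
    intro l hl
    rw [cluster_mergeLabels_of_ne (ne_of_mem_erase hl) (ne_of_mem_erase (mem_of_mem_erase hl))]
  have merged : Metric.diam (cluster K f (f x) ∪ cluster K f (f y)) ≤
      Metric.diam (cluster K f (f x)) + dist x y + Metric.diam (cluster K f (f y)) :=
    Metric.diam_union ⟨hx, rfl⟩ ⟨hy, rfl⟩
  calc totalDiam K (mergeLabels f (f x) (f y))
      ≤ ∑ l ∈ (K.image f).erase (f y),
          Metric.diam (cluster K (mergeLabels f (f x) (f y)) l) :=
        sum_le_sum_of_subset_of_nonneg (image_mergeLabels_subset hxy (mem_image_of_mem f hx))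
          fun _ _ _ => Metric.diam_nonneg
    _ = Metric.diam (cluster K f (f x) ∪ cluster K f (f y)) +
          ∑ l ∈ others, Metric.diam (cluster K f l) := by
        rw [← add_sum_erase _ _ hfx, cluster_mergeLabels_self, sum_congr rfl others_unchanged]
    _ ≤ Metric.diam (cluster K f (f y)) + (Metric.diam (cluster K f (f x)) +
          ∑ l ∈ others, Metric.diam (cluster K f l)) + dist x y := by linarith
    _ = totalDiam K f + dist x y := by
        rw [hothers, add_sum_erase _ (fun l => Metric.diam (cluster K f l)) hfx,
          add_sum_erase _ (fun l => Metric.diam (cluster K f l)) (mem_image_of_mem f hy), totalDiam]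

/-- The labelling `f` gives two points of `K` the same label exactly when they are at distance at
most `r`. In particular, being at distance at most `r` is an equivalence relation on `K`. -/
def IsClusteringAt (K : Finset α) (f : α → ι) (r : ℝ) : Prop :=
  ∀ x ∈ K, ∀ y ∈ K, dist x y ≤ r ↔ f x = f y

lemma exists_isClusteringAt_of_totalDiam_le {m : ℕ} {r : ℝ} (hcard : #(K.image f) ≤ m + 1)
    (hdiam : totalDiam K f ≤ r) :
    ∃ s, ∃ g : α → ι, r ≤ s ∧ s ≤ 2 ^ m * r ∧ IsClusteringAt K g s := by
  have hr : 0 ≤ r := (sum_nonneg fun _ _ => Metric.diam_nonneg).trans hdiam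
  induction m generalizing f r with
  | zero =>
    refine ⟨r, f, le_rfl, by simp, fun x hx y hy => ?_⟩
    have hxy : f x = f y :=
      card_le_one.mp hcard _ (mem_image_of_mem f hx) _ (mem_image_of_mem f hy)
    exact iff_of_true ((dist_le_totalDiam hx hy hxy).trans hdiam) hxy
  | succ m ih =>
    by_cases hclose : ∃ x ∈ K, ∃ y ∈ K, f x ≠ f y ∧ dist x y ≤ r
    · obtain ⟨x, hx, y, hy, hxy, hdist⟩ := hclose
      have hcard' : #(K.image (mergeLabels f (f x) (f y))) ≤ m + 1 := by
        have := card_le_card (image_mergeLabels_subset hxy (mem_image_of_mem f hx))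
        rw [card_erase_of_mem (mem_image_of_mem f hy)] at this
        lia
      have hdiam' : totalDiam K (mergeLabels f (f x) (f y)) ≤ 2 * r := by
        linarith [totalDiam_mergeLabels_le hx hy hxy]
      obtain ⟨s, g, hrs, hsr, hg⟩ := ih hcard' hdiam' (by positivity)
      exact ⟨s, g, by linarith, by rwa [pow_succ, mul_assoc], hg⟩
    · push Not at hclose
      refine ⟨r, f, le_rfl, le_mul_of_one_le_left hr (one_le_pow₀ one_le_two), ?_⟩
      refine fun x hx y hy => ⟨fun hdist => ?_, fun hxy => ?_⟩
      · exact by_contra fun hxy => (hclose x hx y hy hxy).not_ge hdist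
      · exact (dist_le_totalDiam hx hy hxy).trans hdiam

theorem exists_isClusteringAt (K : Finset α) {r : ℝ} (hr : 0 ≤ r) :
    ∃ s, ∃ g : α → α, r ≤ s ∧ s ≤ 2 ^ (#K - 1) * r ∧ IsClusteringAt K g s := by
  classical
  exact exists_isClusteringAt_of_totalDiam_le (f := id) (by rw [image_id]; lia)
    ((totalDiam_id K).trans_le hr)

end Clustering

/-! ### Functions of positive type on a finite set -/

section PositiveType

variable {G ι : Type*} [AddGroup G] {K : Finset G} {g : G → ℂ}

/-- The Hermitian form with matrix `(g (k - l))`, where `k, l ∈ K`, is positive semidefinite; the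
inequality `0 ≤ z` in `ℂ` includes that `z` is real. -/
def IsPositiveTypeOn (K : Finset G) (g : G → ℂ) : Prop :=
  ∀ c : G → ℂ, 0 ≤ ∑ k ∈ K, ∑ l ∈ K, c k * conj (c l) * g (k - l)

lemma isPositiveTypeOn_of_rank_one_on_fibers [DecidableEq ι] (f : G → ι) (φ : G → ℂ)
    (hg : ∀ k ∈ K, ∀ l ∈ K, g (k - l) = if f k = f l then φ k * conj (φ l) else 0) :
    IsPositiveTypeOn K g := by
  intro c
  set fiberSum : ι → ℂ := fun t => ∑ k ∈ K with f k = t, c k * φ k with hfiberSum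
  have row_sum : ∀ k ∈ K, ∑ l ∈ K, c k * conj (c l) * g (k - l) =
      c k * φ k * conj (fiberSum (f k)) := by
    intro k hk
    rw [hfiberSum, map_sum, mul_sum, sum_filter]
    refine sum_congr rfl fun l hl => ?_
    rw [hg k hk l hl, map_mul]
    grind
  have form_eq : ∑ k ∈ K, ∑ l ∈ K, c k * conj (c l) * g (k - l) =
      ∑ t ∈ K.image f, fiberSum t * conj (fiberSum t) := by
    rw [sum_congr rfl row_sum, ← sum_fiberwise_of_maps_to fun k hk => mem_image_of_mem f hk]
    refine sum_congr rfl fun t _ => ?_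
    rw [hfiberSum, sum_mul]
    refine sum_congr rfl fun k hk => ?_
    rw [(mem_filter.mp hk).2]
  rw [form_eq]
  exact sum_nonneg fun t _ => mul_star_self_nonneg (fiberSum t)

end PositiveType

/-! ### Duality between sums of squares and functions of positive type -/

section Duality

variable {N : ℕ} {K : Finset (ZMod N)}

/-- The facet function of the regular `N`-gon. -/
noncomputable def facetFun (N : ℕ) (j : ZMod N) : ℝ :=
  Real.cos (π / N) - Real.cos ((2 * (j.val : ℝ) + 1) * π / N)

lemma SosValid.nonempty (hN : 3 ≤ N) (hK : SosValid N K) : K.Nonempty := by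
  by_contra hempty
  obtain rfl := not_nonempty_iff_eq_empty.mp hempty
  obtain ⟨m, h, hsupp, hsos⟩ := hK
  have : Fact (1 < N) := ⟨by lia⟩
  have h_zero : ∀ i, h i 1 = 0 := fun i => by
    obtain ⟨c, hc⟩ := hsupp i
    simp [hc]
  have hcos : Real.cos (π / N) = Real.cos ((2 * 1 + 1) * π / N) := by
    simpa [h_zero, ZMod.val_one, sub_eq_zero] using hsos 1
  have hN' : (3 : ℝ) ≤ N := by exact_mod_cast hN
  refine (Real.cos_lt_cos_of_nonneg_of_le_pi (by positivity) ?_ ?_).ne' hcos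
  · rw [div_le_iff₀ (by linarith)]
    nlinarith [Real.pi_pos]
  · gcongr
    linarith [Real.pi_pos]

variable [NeZero N]

lemma freq_eq_stdAddChar (k j : ZMod N) : freq N k j = ZMod.stdAddChar (k * j) := by
  have hkj : k * j = (((k.val * j.val : ℕ) : ℤ) : ZMod N) := by simp
  rw [hkj, ZMod.stdAddChar_coe, freq]
  congr 1
  push_cast
  ring

lemma freq_mul_conj_freq (k l j : ZMod N) :
    freq N k j * conj (freq N l j) = freq N (k - l) j := by
  simp only [freq_eq_stdAddChar]
  rw [← AddChar.map_neg_eq_conj, ← AddChar.map_add_eq_mul, sub_mul, sub_eq_add_neg]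

lemma exists_linearMap_freq (g : ZMod N → ℂ) :
    ∃ L : (ZMod N → ℂ) →ₗ[ℂ] ℂ, ∀ k, L (freq N k) = g k := by
  set w : ZMod N → ℂ := ZMod.dft.symm fun k => g (-k) with hw
  refine ⟨∑ j, w j • LinearMap.proj j, fun k => ?_⟩
  calc (∑ j, w j • LinearMap.proj j) (freq N k) = ZMod.dft w (-k) := by
        simp [ZMod.dft_apply, freq_eq_stdAddChar, mul_comm]
    _ = g k := by simp [hw]

lemma SupportedOn.exists_normSq_eq {h : ZMod N → ℂ} (hh : SupportedOn N K h) :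
    ∃ c : ZMod N → ℂ, (fun j => (Complex.normSq (h j) : ℂ)) =
      ∑ k ∈ K, ∑ l ∈ K, (c k * conj (c l)) • freq N (k - l) := by
  obtain ⟨c, rfl⟩ := hh
  refine ⟨c, funext fun j => ?_⟩
  simp only [← Complex.mul_conj, map_sum, map_mul, sum_mul_sum, Finset.sum_apply, Pi.smul_apply,
    smul_eq_mul, ← freq_mul_conj_freq]
  exact sum_congr rfl fun k _ => sum_congr rfl fun l _ => by ring

lemma freq_zero (j : ZMod N) : freq N 0 j = 1 := by simp [freq_eq_stdAddChar]

lemma freq_neg (k j : ZMod N) : freq N (-k) j = (freq N k j)⁻¹ := by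
  simp only [freq_eq_stdAddChar, neg_mul, AddChar.map_neg_eq_inv]

lemma freq_one (j : ZMod N) : freq N 1 j = Circle.exp (2 * π * j.val / N) := by
  rw [freq_eq_stdAddChar, one_mul, ZMod.stdAddChar_apply, ZMod.toCircle_apply, Circle.coe_exp]
  congr 1
  push_cast
  ring

lemma ofReal_facetFun : (fun j => (facetFun N j : ℂ)) =
    (Real.cos (π / N) : ℂ) • freq N 0 -
      (2⁻¹ : ℂ) • ((Circle.exp (π / N) : ℂ) • freq N 1 +
        ((Circle.exp (π / N))⁻¹ : ℂ) • freq N (-1)) := by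
  funext j
  have angle_eq : (2 * (j.val : ℝ) + 1) * π / N = π / N + 2 * π * j.val / N := by ring
  have ofReal_cos_eq (θ : ℝ) :
      (Real.cos θ : ℂ) = 2⁻¹ * (Circle.exp θ + (Circle.exp θ : ℂ)⁻¹) := by
    rw [Circle.coe_exp, ← Complex.exp_neg, ← neg_mul, Complex.ofReal_cos, Complex.cos]
    ring
  have vertex : (Real.cos ((2 * (j.val : ℝ) + 1) * π / N) : ℂ) = 2⁻¹ *
      (Circle.exp (π / N) * freq N 1 j + (Circle.exp (π / N) : ℂ)⁻¹ * (freq N 1 j)⁻¹) := by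
    rw [ofReal_cos_eq, angle_eq, Circle.exp_add, Circle.coe_mul, mul_inv, freq_one]
  simp only [facetFun, Complex.ofReal_sub, vertex, Pi.sub_apply, Pi.add_apply, Pi.smul_apply,
    smul_eq_mul, freq_zero, freq_neg, mul_one]

theorem SosValid.nonneg_of_isPositiveTypeOn (hK : SosValid N K) {g : ZMod N → ℂ}
    (hg : IsPositiveTypeOn K g) :
    0 ≤ Real.cos (π / N) * g 0 -
      2⁻¹ * (Circle.exp (π / N) * g 1 + (Circle.exp (π / N) : ℂ)⁻¹ * g (-1)) := by
  obtain ⟨m, h, hsupp, hsos⟩ := hK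
  obtain ⟨L, hL⟩ := exists_linearMap_freq g
  have square_nonneg : ∀ i, 0 ≤ L fun j => (Complex.normSq (h i j) : ℂ) := fun i => by
    obtain ⟨c, hc⟩ := (hsupp i).exists_normSq_eq
    simpa only [hc, map_sum, map_smul, hL, smul_eq_mul] using hg c
  have facet_eq : (fun j => (facetFun N j : ℂ)) =
      ∑ i, fun j => (Complex.normSq (h i j) : ℂ) := by
    funext j
    rw [facetFun, hsos j, Complex.ofReal_sum, Finset.sum_apply]
  calc 0 ≤ L fun j => (facetFun N j : ℂ) := by
        rw [facet_eq, map_sum]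
        exact sum_nonneg fun i _ => square_nonneg i
    _ = _ := by simp only [ofReal_facetFun, map_sub, map_add, map_smul, hL, smul_eq_mul]

end Duality

/-! ### The cyclic distance and truncated powers -/

section CyclicDistance

variable {N : ℕ}

lemma valMinAbs_one (hN : 2 ≤ N) : (1 : ZMod N).valMinAbs = 1 := by
  simpa using ZMod.valMinAbs_natCast_of_le_half (n := N) (a := 1) (by lia)

lemma valMinAbs_neg_one (hN : 3 ≤ N) : (-1 : ZMod N).valMinAbs = -1 := by
  have : Fact (1 < N) := ⟨by lia⟩
  rw [ZMod.valMinAbs_neg_of_ne_half (by rw [ZMod.val_one]; lia), valMinAbs_one (by lia)]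

/-- The function `k ↦ u ^ k̄`, where `k̄` is the least absolute residue of `k`, cut off at the
frequencies with `|k̄| > γ`. -/
noncomputable def truncPow (γ : ℝ) (u : Circle) (k : ZMod N) : ℂ :=
  if (k.valMinAbs.natAbs : ℝ) ≤ γ then ((u ^ k.valMinAbs : Circle) : ℂ) else 0

lemma truncPow_zero {γ : ℝ} (hγ : 0 ≤ γ) (u : Circle) : truncPow γ u (0 : ZMod N) = 1 := by
  simp [truncPow, hγ]

lemma truncPow_one (hN : 2 ≤ N) {γ : ℝ} (hγ : 1 ≤ γ) (u : Circle) :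
    truncPow γ u (1 : ZMod N) = u := by
  simp [truncPow, valMinAbs_one hN, hγ]

lemma truncPow_neg_one (hN : 3 ≤ N) {γ : ℝ} (hγ : 1 ≤ γ) (u : Circle) :
    truncPow γ u (-1 : ZMod N) = (u : ℂ)⁻¹ := by
  simp [truncPow, valMinAbs_neg_one hN, hγ]

variable [NeZero N]

lemma cycDist_eq_natAbs_valMinAbs (a b : ZMod N) :
    cycDist N a b = (a - b).valMinAbs.natAbs := by
  rw [cycDist, ZMod.valMinAbs_natAbs_eq_min, ← neg_sub a b, ZMod.neg_val]
  split_ifs with h <;> simp [h]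

/-- `ℤ/Nℤ` with the cyclic distance. -/
noncomputable abbrev cycPseudoMetricSpace (N : ℕ) [NeZero N] : PseudoMetricSpace (ZMod N) where
  dist a b := cycDist N a b
  dist_self a := by simp [cycDist]
  dist_comm a b := by rw [cycDist, cycDist, min_comm]
  dist_triangle a b c := by
    have residues : (a - c).valMinAbs.natAbs ≤ ((a - b).valMinAbs + (b - c).valMinAbs).natAbs := by
      simpa using ZMod.natAbs_valMinAbs_add_le (a - b) (b - c)
    simp only [cycDist_eq_natAbs_valMinAbs]
    exact_mod_cast residues.trans (Int.natAbs_add_le _ _)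

lemma valMinAbs_sub_eq_sub {x y r : ZMod N}
    (h : cycDist N x y + cycDist N x r + cycDist N y r < N) :
    (x - y).valMinAbs = (x - r).valMinAbs - (y - r).valMinAbs := by
  have dvd : (N : ℤ) ∣ (x - y).valMinAbs - ((x - r).valMinAbs - (y - r).valMinAbs) := by
    rw [← ZMod.intCast_zmod_eq_zero_iff_dvd]
    push_cast [ZMod.coe_valMinAbs]
    ring
  simp only [cycDist_eq_natAbs_valMinAbs] at h
  exact sub_eq_zero.mp (Int.eq_zero_of_abs_lt_dvd dvd (by rw [abs_lt]; lia))

attribute [local instance] cycPseudoMetricSpace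

lemma IsClusteringAt.isPositiveTypeOn_truncPow {ι : Type*} {K : Finset (ZMod N)} {f : ZMod N → ι}
    {γ : ℝ} (hf : IsClusteringAt K f γ) (hγ : 3 * γ < N) (u : Circle) :
    IsPositiveTypeOn K (truncPow γ u) := by
  classical
  set rep : ZMod N → ZMod N := fun k => Function.invFunOn f K (f k) with hrep
  have rep_mem : ∀ k ∈ K, rep k ∈ K := fun k hk => Function.invFunOn_mem ⟨k, hk, rfl⟩
  have label_rep : ∀ k ∈ K, f (rep k) = f k := fun k hk => Function.invFunOn_eq ⟨k, hk, rfl⟩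
  refine isPositiveTypeOn_of_rank_one_on_fibers f
    (fun k => ((u ^ (k - rep k).valMinAbs : Circle) : ℂ)) fun k hk l hl => ?_
  have near_iff : ((k - l).valMinAbs.natAbs : ℝ) ≤ γ ↔ f k = f l := by
    rw [← cycDist_eq_natAbs_valMinAbs]
    exact hf k hk l hl
  simp only [truncPow, near_iff]
  split_ifs with hkl
  · have rep_eq : rep l = rep k := by simp only [hrep, hkl]
    have dist_k_l : (cycDist N k l : ℝ) ≤ γ := (hf k hk l hl).mpr hkl
    have dist_k_rep : (cycDist N k (rep k) : ℝ) ≤ γ :=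
      (hf k hk _ (rep_mem k hk)).mpr (label_rep k hk).symm
    have dist_l_rep : (cycDist N l (rep k) : ℝ) ≤ γ :=
      (hf l hl _ (rep_mem k hk)).mpr (hkl.symm.trans (label_rep k hk).symm)
    have no_wrap : cycDist N k l + cycDist N k (rep k) + cycDist N l (rep k) < N := by
      rify
      linarith
    rw [rep_eq, valMinAbs_sub_eq_sub no_wrap, zpow_sub, Circle.coe_mul, Circle.coe_inv_eq_conj]
  · rfl

theorem SosValid.le_three_mul_two_pow {K : Finset (ZMod N)} (hK : SosValid N K) :
    N ≤ 3 * 2 ^ (#K - 1) := by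
  by_contra! hlt
  have one_le : 1 ≤ 2 ^ (#K - 1) := Nat.one_le_two_pow
  obtain ⟨γ, f, hγ_one, hγ, hf⟩ := exists_isClusteringAt K zero_le_one
  have hγN : 3 * γ < N := by
    have : (3 * 2 ^ (#K - 1) : ℝ) < N := by exact_mod_cast hlt
    linarith
  have one_le_cos : 1 ≤ Real.cos (π / N) := by
    have facet_nonneg := hK.nonneg_of_isPositiveTypeOn
      (hf.isPositiveTypeOn_truncPow hγN (Circle.exp (π / N))⁻¹)
    rw [truncPow_zero (by linarith), truncPow_one (by lia) hγ_one,
      truncPow_neg_one (by lia) hγ_one, Circle.coe_inv, inv_inv,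
      mul_inv_cancel₀ (Circle.coe_ne_zero _), inv_mul_cancel₀ (Circle.coe_ne_zero _), mul_one,
      one_add_one_eq_two, inv_mul_cancel₀ two_ne_zero, sub_nonneg] at facet_nonneg
    exact_mod_cast facet_nonneg
  have cos_lt_one : Real.cos (π / N) < Real.cos 0 := by
    have hN : (1 : ℝ) ≤ N := by exact_mod_cast NeZero.one_le
    exact Real.cos_lt_cos_of_nonneg_of_le_pi le_rfl (div_le_self Real.pi_pos.le hN) (by positivity)
  exact (one_le_cos.trans_lt cos_lt_one).ne' Real.cos_zero

end CyclicDistance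

/-- Any sos-valid set of frequencies for the regular `N`-gon has at least `ln(N/2)`
elements. -/
theorem sosValid_card_lb (N : ℕ) (hN : 3 ≤ N) (K : Finset (ZMod N))
    (hK : SosValid N K) : Real.log (N / 2) ≤ (K.card : ℝ) := by
  have : NeZero N := ⟨by lia⟩
  have card_pos : 0 < #K := (hK.nonempty hN).card_pos
  have N_le : (N : ℝ) ≤ 3 * 2 ^ (#K - 1) := by exact_mod_cast hK.le_three_mul_two_pow
  have two_le_exp : 2 ≤ Real.exp 1 := by linarith [Real.add_one_le_exp 1]
  rw [Real.log_le_iff_le_exp (by positivity)]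
  calc (N : ℝ) / 2 ≤ 2 * 2 ^ (#K - 1) := by linarith [pow_pos (two_pos (α := ℝ)) (#K - 1)]
    _ = 2 ^ #K := mul_pow_sub_one card_pos.ne' 2
    _ ≤ Real.exp 1 ^ #K := by gcongr
    _ = Real.exp #K := Real.exp_one_pow #K
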